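/- Let T(N) denote the number of congruence classes of unordered triples of pairwise distinct points of the grid [N]×[N] ⊆ ℝ². Then liminf over N → ∞ of T(N)/N⁴ is at least 0.1558. -/

import Mathlib

open Real

noncomputable section

/-- The Euclidean plane. -/
abbrev Plane : Type := EuclideanSpace ℝ (Fin 2)

/-- A point of the plane from coordinates. -/
def pt (x y : ℝ) : Plane := (WithLp.equiv 2 (Fin 2 → ℝ)).symm ![x, y]

/-- The embedding of the integer lattice `ℤ²` into the plane. -/
def toPlane (P : ℤ × ℤ) : Plane := pt P.1 P.2

/-- Membership in the grid `[N] × [N] = {0, 1, …, N-1}²`. -/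
def inGrid (N : ℕ) (P : ℤ × ℤ) : Prop := 0 ≤ P.1 ∧ P.1 < N ∧ 0 ≤ P.2 ∧ P.2 < N

/-- Two sets of points in the plane are congruent if some isometry of `ℝ²`
maps one onto the other. -/
def Cong (S T : Set Plane) : Prop := ∃ f : Plane ≃ᵢ Plane, f '' S = T

/-- The unordered triples of pairwise distinct points of the grid `[N] × [N]`,
viewed as subsets of the plane. -/
def gridTriples (N : ℕ) : Set (Set Plane) :=
  {s | ∃ a b c : ℤ × ℤ, inGrid N a ∧ inGrid N b ∧ inGrid N c ∧
    a ≠ b ∧ a ≠ c ∧ b ≠ c ∧ s = {toPlane a, toPlane b, toPlane c}}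

/-- `T N` is the number of congruence classes of unordered triples of pairwise
distinct points of the grid `[N] × [N]`. -/
def T (N : ℕ) : ℕ :=
  ((fun t => {t' ∈ gridTriples N | Cong t t'}) '' gridTriples N).ncard

/-!
Place a triangle with a vertex at the origin and regard its side vectors `z`, `w` as Gaussian
integers. A congruence onto another lattice triangle multiplies both, up to conjugation, by a
Gaussian rational `m / c` of modulus one. In lowest terms every prime divisor `p` of `c` is `1`
modulo `4` and a Gaussian prime above `p` divides both `z` and `w`. If `z` and `w` have no such
common factor, then only the symmetries of the square lattice are left.

Consider the triangles whose bounding box has a vertex of the triangle at exactly one corner, or at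
two opposite corners. Normalized by these symmetries, each family has `N ^ 4 / 8` members
asymptotically. A class meets the first family once and the second at most twice, because of the
half turn `w ↦ z - w`, which would give the constant `(1 + 1 / 2) / 8 = 3 / 16`. The two Gaussian
primes above `p` spoil a proportion of at most `2 / p ^ 2` of each family, so at most
`3 / 8 * ∑ 1 / p ^ 2` is lost. The sum over `p` and the limit in `N` are exchanged by dominated
convergence: a packing argument for the lattice of multiples of a Gaussian prime shows that the
term of `p` is `O(1 / p ^ 2)` uniformly in `N`.
-/

open Finset Filter Topology

/-- A prime congruent to `1` modulo `4`, that is, one that splits in the Gaussian integers. -/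
abbrev SplitPrime : Type := {p : ℕ // p.Prime ∧ p % 4 = 1}

instance (p : SplitPrime) : Fact (p : ℕ).Prime := ⟨p.2.1⟩

/-- `z` and `w` have a common Gaussian prime factor above `p`. For a split prime `p`, the Gaussian
primes above `p` are the kernels of the ring homomorphisms to `ZMod p`. -/
def CommonSplitFactor (p : ℕ) (z w : GaussianInt) : Prop :=
  ∃ φ : GaussianInt →+* ZMod p, φ z = 0 ∧ φ w = 0

section GaussianHoms

variable {R : Type*} [CommRing R]

lemma map_gaussianInt_eq (φ : GaussianInt →+* R) (z : GaussianInt) :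
    φ z = z.re + z.im * φ Zsqrtd.sqrtd := by
  obtain ⟨x, y⟩ := z
  rw [Zsqrtd.decompose, map_add, map_mul, map_intCast, map_intCast, mul_comm, ← Zsqrtd.decompose]

lemma map_sqrtd_sq (φ : GaussianInt →+* R) : φ Zsqrtd.sqrtd ^ 2 = -1 := by
  rw [sq, ← map_mul, Zsqrtd.dmuld, map_intCast, Int.cast_neg, Int.cast_one]

lemma isUnit_map_sqrtd (φ : GaussianInt →+* R) : IsUnit (φ Zsqrtd.sqrtd) :=
  .of_mul_eq_one (-φ Zsqrtd.sqrtd) (by rw [mul_neg, ← sq, map_sqrtd_sq, neg_neg])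

lemma intCast_norm_eq_zero_of_map_eq_zero {φ : GaussianInt →+* R} {z : GaussianInt}
    (h : φ z = 0) : (z.norm : R) = 0 := by
  rw [← map_intCast φ, Zsqrtd.norm_eq_mul_conj, map_mul, h, zero_mul]

lemma ringHom_eq_or_eq_comp_star [IsDomain R] (φ ψ : GaussianInt →+* R) :
    ψ = φ ∨ ψ = φ.comp (starRingEnd GaussianInt) := by
  have hsq : ψ Zsqrtd.sqrtd ^ 2 = φ Zsqrtd.sqrtd ^ 2 := by rw [map_sqrtd_sq, map_sqrtd_sq]
  refine (sq_eq_sq_iff_eq_or_eq_neg.1 hsq).imp (Zsqrtd.hom_ext _ _) fun h ↦ Zsqrtd.hom_ext _ _ ?_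
  have hstar : starRingEnd GaussianInt Zsqrtd.sqrtd = -Zsqrtd.sqrtd := by
    ext <;> simp [starRingEnd_apply]
  rw [RingHom.comp_apply, hstar, map_neg, h]

lemma exists_map_ne_zero_of_isCoprime [IsDomain R] (φ : GaussianInt →+* R) (htwo : (2 : R) ≠ 0)
    {m : GaussianInt} (hm : IsCoprime m.re m.im) : ∃ ψ : GaussianInt →+* R, ψ m ≠ 0 := by
  by_contra! hvanish
  have hsub : (m.re : R) + m.im * φ Zsqrtd.sqrtd = 0 := by rw [← map_gaussianInt_eq, hvanish]
  have hconj : (m.re : R) - m.im * φ Zsqrtd.sqrtd = 0 := by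
    have := hvanish (φ.comp (starRingEnd GaussianInt))
    rw [RingHom.comp_apply, map_gaussianInt_eq] at this
    simpa [starRingEnd_apply, sub_eq_add_neg] using this
  have hre : (m.re : R) = 0 :=
    (mul_eq_zero_iff_left htwo).1 (by linear_combination hsub + hconj)
  have him : (m.im : R) = 0 :=
    (mul_eq_zero_iff_right (isUnit_map_sqrtd φ).ne_zero).1 (by linear_combination hsub - hre)
  obtain ⟨s, t, hst⟩ := hm
  have := congrArg (Int.cast : ℤ → R) hst
  simp [hre, him] at this

end GaussianHoms

section CoprimeSides

lemma SplitPrime.nonempty_ringHom (p : SplitPrime) : Nonempty (GaussianInt →+* ZMod p) := by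
  have hp : (p : ℕ) % 4 ≠ 3 := by have := p.2.2; lia
  obtain ⟨i, hi⟩ := ZMod.exists_sq_eq_neg_one_iff.2 hp
  exact ⟨Zsqrtd.lift ⟨i, by simpa using hi.symm⟩⟩

lemma SplitPrime.two_ne_zero (p : SplitPrime) : (2 : ZMod p) ≠ 0 :=
  Ring.two_ne_zero <| by
    rw [ZMod.ringChar_zmod_n]
    have := p.2.2
    lia

lemma exists_splitPrime_dvd_of_norm_eq_sq {m : GaussianInt} {c : ℤ} (hm : IsCoprime m.re m.im)
    (hc : m.norm = c ^ 2) (hunit : ¬IsUnit c) : ∃ p : SplitPrime, (p : ℤ) ∣ c := by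
  have hnorm : c ^ 2 = m.re ^ 2 + m.im ^ 2 := by rw [← hc, Zsqrtd.norm_def]; ring
  have hsquare : IsSquare (-1 : ZMod (c ^ 2).natAbs) :=
    ZMod.isSquare_neg_one_of_eq_sq_add_sq_of_isCoprime hnorm hm
  obtain ⟨p, hp, hpc⟩ := Nat.exists_prime_and_dvd (mt Int.isUnit_iff_natAbs_eq.2 hunit)
  have hp_sq : p ^ 2 ∣ (c ^ 2).natAbs := by rw [Int.natAbs_pow]; exact pow_dvd_pow_of_dvd hpc 2
  have hp_two : p ≠ 2 := by
    rintro rfl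
    exact absurd (ZMod.isSquare_neg_one_of_dvd hp_sq hsquare) (by decide)
  have hp_dvd : p ∣ (c ^ 2).natAbs := (dvd_pow_self p two_ne_zero).trans hp_sq
  have : Fact p.Prime := ⟨hp⟩
  have hp_mod : p % 4 ≠ 3 :=
    ZMod.exists_sq_eq_neg_one_iff.1 (ZMod.isSquare_neg_one_of_dvd hp_dvd hsquare)
  have hp_odd := hp.eq_two_or_odd
  exact ⟨⟨p, hp, by lia⟩, Int.natCast_dvd.2 hpc⟩

lemma exists_isCoprime_of_norm_eq_sq {M : GaussianInt} {n : ℤ} (hn : n ≠ 0)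
    (hM : M.norm = n ^ 2) :
    ∃ (g c : ℤ) (m : GaussianInt), g ≠ 0 ∧ M = g * m ∧ n = g * c ∧ IsCoprime m.re m.im ∧
      m.norm = c ^ 2 := by
  have hgcd : 0 < Int.gcd M.re M.im := by
    rw [Int.gcd_pos_iff, ← not_and_or]
    rintro ⟨hre, him⟩
    rw [Zsqrtd.norm_def, hre, him] at hM
    exact pow_ne_zero 2 hn (by lia)
  obtain ⟨m, hMm, hm⟩ := Zsqrtd.exists_coprime_of_gcd_pos hgcd
  set g : ℤ := ((Int.gcd M.re M.im : ℕ) : ℤ)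
  have hg : g ≠ 0 := (Int.natCast_pos.2 hgcd).ne'
  have hgm : g ^ 2 * m.norm = n ^ 2 := by
    rw [← hM, hMm, Zsqrtd.norm_mul, Zsqrtd.norm_intCast, sq]
  obtain ⟨c, rfl⟩ : g ∣ n := (Int.pow_dvd_pow_iff two_ne_zero).1 ⟨_, hgm.symm⟩
  rw [mul_pow] at hgm
  exact ⟨g, c, m, hg, hMm, rfl, hm, mul_left_cancel₀ (pow_ne_zero 2 hg) hgm⟩

/-- The hypotheses say that `z' / z` and `w' / w` agree and have modulus one; here their common
value is put in lowest terms `m / c`. -/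
lemma exists_intCast_mul_eq_mul {z w z' w' : GaussianInt} (hz : z ≠ 0)
    (hnorm : z'.norm = z.norm) (hinner : star z' * w' = star z * w) :
    ∃ (c : ℤ) (m : GaussianInt), IsCoprime m.re m.im ∧ m.norm = c ^ 2 ∧
      c * z' = m * z ∧ c * w' = m * w := by
  have hM : (z' * star z).norm = z.norm ^ 2 := by
    rw [Zsqrtd.norm_mul, Zsqrtd.norm_conj, hnorm, sq]
  have hMz : (z.norm : GaussianInt) * z' = z' * star z * z := by
    rw [Zsqrtd.norm_eq_mul_conj]; ring
  have hMw : (z.norm : GaussianInt) * w' = z' * star z * w := by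
    rw [← hnorm, Zsqrtd.norm_eq_mul_conj, mul_assoc z', hinner, mul_assoc]
  obtain ⟨g, c, m, hg, hMm, hgc, hm, hmc⟩ :=
    exists_isCoprime_of_norm_eq_sq (GaussianInt.norm_pos.2 hz).ne' hM
  have hcancel {u u' : GaussianInt} (h : (z.norm : GaussianInt) * u' = z' * star z * u) :
      c * u' = m * u := by
    refine mul_left_cancel₀ (Int.cast_ne_zero.2 hg : (g : GaussianInt) ≠ 0) ?_
    rw [← mul_assoc, ← Int.cast_mul, ← hgc, h, hMm, mul_assoc]
  exact ⟨c, m, hm, hmc, hcancel hMz, hcancel hMw⟩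

lemma commonSplitFactor_of_intCast_mul_eq_mul {z w z' w' m : GaussianInt} {c : ℤ} {p : SplitPrime}
    (hp : (p : ℤ) ∣ c) (hm : IsCoprime m.re m.im) (hz : c * z' = m * z) (hw : c * w' = m * w) :
    CommonSplitFactor p z w := by
  obtain ⟨φ₀⟩ := p.nonempty_ringHom
  obtain ⟨φ, hφ⟩ := exists_map_ne_zero_of_isCoprime φ₀ p.two_ne_zero hm
  have hφc : φ c = 0 := by rw [map_intCast, (ZMod.intCast_zmod_eq_zero_iff_dvd _ _).2 hp]
  have hvanish {u u' : GaussianInt} (h : c * u' = m * u) : φ u = 0 := by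
    have hmap := congrArg φ h
    rw [map_mul, map_mul, hφc, zero_mul, zero_eq_mul] at hmap
    exact hmap.resolve_left hφ
  exact ⟨φ, hvanish hz, hvanish hw⟩

lemma exists_norm_eq_one_of_star_mul_eq {z w z' w' : GaussianInt} (hz : z ≠ 0)
    (hnorm : z'.norm = z.norm) (hinner : star z' * w' = star z * w)
    (hfree : ∀ p : SplitPrime, ¬CommonSplitFactor p z w) :
    ∃ ε : GaussianInt, ε.norm = 1 ∧ z' = ε * z ∧ w' = ε * w := by
  obtain ⟨c, m, hm, hmc, hcz, hcw⟩ := exists_intCast_mul_eq_mul hz hnorm hinner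
  have hunit : IsUnit c := by
    by_contra hunit
    obtain ⟨p, hpc⟩ := exists_splitPrime_dvd_of_norm_eq_sq hm hmc hunit
    exact hfree p (commonSplitFactor_of_intCast_mul_eq_mul hpc hm hcz hcw)
  have hcc : (c : GaussianInt) * c = 1 := mod_cast Int.isUnit_mul_self hunit
  have hrot {u u' : GaussianInt} (h : c * u' = m * u) : u' = c * m * u := by
    rw [mul_assoc, ← h, ← mul_assoc, hcc, one_mul]
  refine ⟨c * m, ?_, hrot hcz, hrot hcw⟩
  rw [Zsqrtd.norm_mul, Zsqrtd.norm_intCast, hmc, sq, Int.isUnit_mul_self hunit, one_mul]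

lemma star_mul_eq_or_mul_star_eq {z w z' w' : GaussianInt} (hz : z'.norm = z.norm)
    (hw : w'.norm = w.norm) (hzw : (z' - w').norm = (z - w).norm) :
    star z' * w' = star z * w ∨ z' * star w' = star z * w := by
  simp only [Zsqrtd.norm_def, Zsqrtd.re_sub, Zsqrtd.im_sub] at hz hw hzw
  have hdot : z'.re * w'.re + z'.im * w'.im = z.re * w.re + z.im * w.im := by linarith
  have hcross : (z'.re * w'.im - z'.im * w'.re) ^ 2 = (z.re * w.im - z.im * w.re) ^ 2 := by
    linear_combination (w'.re ^ 2 + w'.im ^ 2) * hz + (z.re ^ 2 + z.im ^ 2) * hw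
      - (z'.re * w'.re + z'.im * w'.im + z.re * w.re + z.im * w.im) * hdot
  refine (sq_eq_sq_iff_eq_or_eq_neg.1 hcross).imp (fun h ↦ ?_) fun h ↦ ?_ <;>
  · ext <;>
      simp only [Zsqrtd.re_mul, Zsqrtd.im_mul, Zsqrtd.re_star, Zsqrtd.im_star] <;>
      linarith

theorem exists_norm_eq_one_of_norm_eq {z w z' w' : GaussianInt} (hz_ne : z ≠ 0)
    (hz : z'.norm = z.norm) (hw : w'.norm = w.norm) (hzw : (z' - w').norm = (z - w).norm)
    (hfree : ∀ p : SplitPrime, ¬CommonSplitFactor p z w) :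
    ∃ ε : GaussianInt, ε.norm = 1 ∧
      (z' = ε * z ∧ w' = ε * w ∨ star z' = ε * z ∧ star w' = ε * w) := by
  rcases star_mul_eq_or_mul_star_eq hz hw hzw with h | h
  · obtain ⟨ε, hε, hrot⟩ := exists_norm_eq_one_of_star_mul_eq hz_ne hz h hfree
    exact ⟨ε, hε, .inl hrot⟩
  · obtain ⟨ε, hε, hrefl⟩ := exists_norm_eq_one_of_star_mul_eq (z' := star z') (w' := star w')
      hz_ne (by rwa [Zsqrtd.norm_conj]) (by rwa [star_star]) hfree
    exact ⟨ε, hε, .inr hrefl⟩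

end CoprimeSides

section Congruence

/-- The point of the plane with the coordinates of a Gaussian integer. -/
def gaussPt (z : GaussianInt) : Plane := toPlane (z.re, z.im)

/-- The vertex set of the triangle spanned by the side vectors `z` and `w` at the origin. -/
def triangle (z w : GaussianInt) : Set Plane := {gaussPt 0, gaussPt z, gaussPt w}

/-- The congruence class of `t` within the triples of the grid `[N] × [N]`. -/
def congClass (N : ℕ) (t : Set Plane) : Set (Set Plane) := {t' ∈ gridTriples N | Cong t t'}

/-- The set of congruence classes counted by `T N`. -/
def congClasses (N : ℕ) : Set (Set (Set Plane)) := congClass N '' gridTriples N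

lemma Cong.refl (s : Set Plane) : Cong s s := ⟨.refl _, Set.image_id s⟩

lemma Cong.symm {s t : Set Plane} (h : Cong s t) : Cong t s := by
  obtain ⟨f, rfl⟩ := h
  exact ⟨f.symm, f.toEquiv.symm_image_image s⟩

lemma Cong.trans {s t u : Set Plane} (hst : Cong s t) (htu : Cong t u) : Cong s u := by
  obtain ⟨f, rfl⟩ := hst
  obtain ⟨g, rfl⟩ := htu
  exact ⟨f.trans g, Set.image_comp g f s⟩

lemma congClass_eq_of_cong {N : ℕ} {s t : Set Plane} (h : Cong s t) :
    congClass N s = congClass N t :=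
  Set.ext fun _ ↦ and_congr_right fun _ ↦ ⟨h.symm.trans, h.trans⟩

lemma cong_of_congClass_eq {N : ℕ} {s t : Set Plane} (ht : t ∈ gridTriples N)
    (h : congClass N s = congClass N t) : Cong s t :=
  (h.ge ⟨ht, .refl t⟩).2

lemma dist_gaussPt_sq (z w : GaussianInt) : dist (gaussPt z) (gaussPt w) ^ 2 = (z - w).norm := by
  simp only [gaussPt, toPlane, pt, EuclideanSpace.dist_sq_eq, Fin.sum_univ_two, Real.dist_eq,
    sq_abs, WithLp.equiv_symm_apply, Matrix.cons_val_zero, Matrix.cons_val_one, Zsqrtd.norm_def,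
    Zsqrtd.re_sub, Zsqrtd.im_sub]
  push_cast
  ring

lemma norm_sub_eq_of_dist_eq {z w z' w' : GaussianInt}
    (h : dist (gaussPt z') (gaussPt w') = dist (gaussPt z) (gaussPt w)) :
    (z' - w').norm = (z - w).norm := by
  rw [← Int.cast_inj (α := ℝ), ← dist_gaussPt_sq, ← dist_gaussPt_sq, h]

lemma Cong.exists_norm_sub_eq {z w z' w' : GaussianInt}
    (h : Cong (triangle z w) (triangle z' w')) :
    ∃ u₀ u₁ u₂ : GaussianInt, (u₀ = 0 ∨ u₀ = z' ∨ u₀ = w') ∧ (u₁ = 0 ∨ u₁ = z' ∨ u₁ = w') ∧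
      (u₂ = 0 ∨ u₂ = z' ∨ u₂ = w') ∧ (u₁ - u₀).norm = z.norm ∧ (u₂ - u₀).norm = w.norm ∧
      (u₁ - u₀ - (u₂ - u₀)).norm = (z - w).norm := by
  obtain ⟨f, hf⟩ := h
  have hvertex {v : GaussianInt} (hv : gaussPt v ∈ triangle z w) :
      ∃ u, (u = 0 ∨ u = z' ∨ u = w') ∧ gaussPt u = f (gaussPt v) := by
    have : f (gaussPt v) ∈ triangle z' w' := hf ▸ Set.mem_image_of_mem f hv
    rcases this with h | h | h
    exacts [⟨0, .inl rfl, h.symm⟩, ⟨z', .inr (.inl rfl), h.symm⟩, ⟨w', .inr (.inr rfl), h.symm⟩]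
  obtain ⟨u₀, hu₀, h₀⟩ := hvertex (v := 0) (.inl rfl)
  obtain ⟨u₁, hu₁, h₁⟩ := hvertex (v := z) (.inr (.inl rfl))
  obtain ⟨u₂, hu₂, h₂⟩ := hvertex (v := w) (.inr (.inr rfl))
  have hside {u u' v v' : GaussianInt} (h : gaussPt u = f (gaussPt v))
      (h' : gaussPt u' = f (gaussPt v')) : (u - u').norm = (v - v').norm :=
    norm_sub_eq_of_dist_eq (by rw [h, h', f.dist_eq])
  refine ⟨u₀, u₁, u₂, hu₀, hu₁, hu₂, ?_, ?_, ?_⟩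
  · rw [hside h₁ h₀, sub_zero]
  · rw [hside h₂ h₀, sub_zero]
  · rw [sub_sub_sub_cancel_right, hside h₁ h₂]

lemma eq_one_or_neg_one_or_I_or_neg_I_of_norm_eq_one {ε : GaussianInt} (hε : ε.norm = 1) :
    ε = 1 ∨ ε = -1 ∨ ε = Zsqrtd.sqrtd ∨ ε = -Zsqrtd.sqrtd := by
  obtain ⟨x, y⟩ := ε
  have h : x * x + y * y = 1 := by rw [← hε, Zsqrtd.norm_def]; ring
  have hx : x ∈ Set.Icc (-1) 1 := ⟨by nlinarith, by nlinarith⟩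
  have hy : y ∈ Set.Icc (-1) 1 := ⟨by nlinarith, by nlinarith⟩
  obtain ⟨hx₀, hx₁⟩ := hx
  obtain ⟨hy₀, hy₁⟩ := hy
  interval_cases x <;> interval_cases y <;> simp_all [Zsqrtd.ext_iff]

/-- Side vectors of a triangle whose vertex at the origin is a corner of its bounding box, the
longer sides of the box being horizontal and `z` reaching across it. -/
structure IsStandard (z w : GaussianInt) : Prop where
  re_pos : 0 < w.re
  re_lt : w.re < z.re
  im_pos_left : 0 < z.im
  im_lt_left : z.im < z.re
  im_pos_right : 0 < w.im
  im_lt_right : w.im < z.re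

/-- Only the half turn of the bounding box preserves the standard position. -/
theorem IsStandard.eq_of_cong {z w z' w' : GaussianInt} (h : IsStandard z w)
    (h' : IsStandard z' w') (hfree : ∀ p : SplitPrime, ¬CommonSplitFactor p z w)
    (hcong : Cong (triangle z w) (triangle z' w')) : z' = z ∧ (w' = w ∨ w' = z - w) := by
  obtain ⟨u₀, u₁, u₂, hu₀, hu₁, hu₂, h₁, h₂, h₁₂⟩ := hcong.exists_norm_sub_eq
  have hz : z ≠ 0 := by rintro rfl; exact lt_irrefl _ (h.re_pos.trans h.re_lt)
  obtain ⟨ε, hε, hmap⟩ := exists_norm_eq_one_of_norm_eq hz h₁ h₂ h₁₂ hfree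
  clear h₁ h₂ h₁₂ hfree hcong hz
  obtain ⟨_, _, _, _, _, _⟩ := h
  obtain ⟨_, _, _, _, _, _⟩ := h'
  rcases eq_one_or_neg_one_or_I_or_neg_I_of_norm_eq_one hε with rfl | rfl | rfl | rfl <;>
  rcases hmap with ⟨hz, hw⟩ | ⟨hz, hw⟩ <;>
  simp only [Zsqrtd.ext_iff, Zsqrtd.re_mul, Zsqrtd.im_mul, Zsqrtd.re_star, Zsqrtd.im_star,
    Zsqrtd.re_sub, Zsqrtd.im_sub, Zsqrtd.re_neg, Zsqrtd.im_neg, Zsqrtd.re_one, Zsqrtd.im_one,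
    Zsqrtd.re_sqrtd, Zsqrtd.im_sqrtd, Zsqrtd.re_zero, Zsqrtd.im_zero] at * <;>
  omega

end Congruence

section GridTriples

lemma gaussPt_sub (z w : GaussianInt) : gaussPt (z - w) = gaussPt z - gaussPt w := by
  ext i
  fin_cases i <;> simp [gaussPt, toPlane, pt]

/-- The Gaussian integers in the square `[0, N) × [0, N)`. -/
def gaussBox (N : ℕ) : Finset GaussianInt :=
  (range N ×ˢ range N).image fun P ↦ ⟨P.1, P.2⟩

lemma mem_gaussBox {N : ℕ} {z : GaussianInt} :
    z ∈ gaussBox N ↔ (0 ≤ z.re ∧ z.re < N) ∧ 0 ≤ z.im ∧ z.im < N := by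
  simp only [gaussBox, mem_image, mem_product, mem_range, Zsqrtd.ext_iff, Prod.exists]
  refine ⟨?_, fun h ↦ ⟨z.re.toNat, z.im.toNat, ?_⟩⟩
  · rintro ⟨x, y, h⟩; lia
  · lia

lemma card_gaussBox (N : ℕ) : #(gaussBox N) = N ^ 2 := by
  rw [gaussBox, card_image_of_injective, card_product, card_range, sq]
  intro P Q h
  simpa [Zsqrtd.ext_iff, Prod.ext_iff] using h

lemma triangle_mem_gridTriples {N : ℕ} {z w : GaussianInt} (hz : z ∈ gaussBox N)
    (hw : w ∈ gaussBox N) (hz_ne : z ≠ 0) (hw_ne : w ≠ 0) (hne : z ≠ w) :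
    triangle z w ∈ gridTriples N := by
  simp only [mem_gaussBox, ne_eq, Zsqrtd.ext_iff, Zsqrtd.re_zero, Zsqrtd.im_zero] at *
  refine ⟨(0, 0), (z.re, z.im), (w.re, w.im), ?_, ?_, ?_, ?_, ?_, ?_, rfl⟩ <;>
    simp only [inGrid, ne_eq, Prod.mk.injEq] <;> lia

lemma exists_cong_triangle {N : ℕ} {t : Set Plane} (ht : t ∈ gridTriples N) :
    ∃ z ∈ gaussBox (2 * N), ∃ w ∈ gaussBox (2 * N),
      Cong t (triangle (z - ⟨N, N⟩) (w - ⟨N, N⟩)) := by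
  obtain ⟨a, b, c, ha, hb, hc, -, -, -, rfl⟩ := ht
  let gauss (P : ℤ × ℤ) : GaussianInt := ⟨P.1, P.2⟩
  have hbox {P : ℤ × ℤ} (hP : inGrid N P) : gauss P - gauss a + ⟨N, N⟩ ∈ gaussBox (2 * N) := by
    simp only [inGrid] at ha hP
    simp only [mem_gaussBox, Zsqrtd.re_add, Zsqrtd.im_add, Zsqrtd.re_sub, Zsqrtd.im_sub, gauss]
    lia
  refine ⟨_, hbox hb, _, hbox hc, .subRight (toPlane a), ?_⟩
  rw [Set.image_insert_eq, Set.image_pair, triangle, add_sub_cancel_right, add_sub_cancel_right,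
    ← sub_self (gauss a), gaussPt_sub, gaussPt_sub, gaussPt_sub]
  rfl

lemma congClasses_subset_image (N : ℕ) :
    congClasses N ⊆ (fun q : GaussianInt × GaussianInt ↦
        congClass N (triangle (q.1 - ⟨N, N⟩) (q.2 - ⟨N, N⟩))) ''
      ↑(gaussBox (2 * N) ×ˢ gaussBox (2 * N)) := by
  rintro _ ⟨t, ht, rfl⟩
  obtain ⟨z, hz, w, hw, hcong⟩ := exists_cong_triangle ht
  exact ⟨(z, w), mem_product.2 ⟨hz, hw⟩, (congClass_eq_of_cong hcong).symm⟩

lemma finite_congClasses (N : ℕ) : (congClasses N).Finite :=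
  ((finite_toSet _).image _).subset (congClasses_subset_image N)

lemma T_le (N : ℕ) : T N ≤ 16 * N ^ 4 :=
  calc T N ≤ _ := Set.ncard_le_ncard (congClasses_subset_image N) ((finite_toSet _).image _)
    _ ≤ #(gaussBox (2 * N) ×ˢ gaussBox (2 * N)) :=
      (Set.ncard_image_le (finite_toSet _)).trans_eq (Set.ncard_coe_finset _)
    _ = 16 * N ^ 4 := by rw [card_product, card_gaussBox]; ring

end GridTriples

section Families

/-- The parameters `(a, c, v, u)` of the two families of triangles: `a` is the width of the
bounding box, `c` the abscissa of its third vertex, and `u < v` are the two positive ordinates. -/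
def wedge (N : ℕ) : Finset (ℕ × ℕ × ℕ × ℕ) :=
  {x ∈ range N ×ˢ range N ×ˢ range N ×ˢ range N |
    0 < x.2.1 ∧ x.2.1 < x.1 ∧ 0 < x.2.2.2 ∧ x.2.2.2 < x.2.2.1 ∧ x.2.2.1 < x.1}

lemma mem_wedge {N a c v u : ℕ} :
    (a, c, v, u) ∈ wedge N ↔ a < N ∧ 0 < c ∧ c < a ∧ 0 < u ∧ u < v ∧ v < a := by
  simp only [wedge, mem_filter, mem_product, mem_range]
  lia

lemma card_wedge (N : ℕ) :
    #(wedge N) = ∑ a ∈ range N, (a - 1) * ∑ v ∈ range a, (v - 1) := by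
  calc #(wedge N)
      = #((range N).sigma fun a ↦ Ioo 0 a ×ˢ (range a).sigma fun v ↦ Ioo 0 v) :=
        card_nbij' (fun (a, c, v, u) ↦ ⟨a, c, v, u⟩) (fun ⟨a, c, v, u⟩ ↦ (a, c, v, u))
          (by rintro ⟨a, c, v, u⟩ h
              simp only [mem_coe, mem_wedge, mem_sigma, mem_product, mem_range, mem_Ioo] at h ⊢
              lia)
          (by rintro ⟨a, c, v, u⟩ h
              simp only [mem_coe, mem_wedge, mem_sigma, mem_product, mem_range, mem_Ioo] at h ⊢
              lia)
          (fun _ _ ↦ rfl) (fun _ _ ↦ rfl)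
    _ = _ := by simp only [card_sigma, card_product, Nat.card_Ioo, tsub_zero]

lemma two_mul_sum_range_sub_one (n : ℕ) : 2 * ∑ k ∈ range (n + 1), (k - 1) = n * (n - 1) := by
  induction n with
  | zero => simp
  | succ n ih =>
    rw [sum_range_succ, mul_add, ih]
    rcases n with _ | n
    · rfl
    · rw [Nat.add_sub_cancel, Nat.add_sub_cancel]
      ring

lemma eight_mul_card_wedge_succ (N : ℕ) :
    8 * #(wedge (N + 1)) = 8 * #(wedge N) + 4 * (N - 1) ^ 2 * (N - 2) := by
  rw [card_wedge, sum_range_succ, ← card_wedge]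
  rcases N with _ | n
  · simp
  · rw [show n + 1 - 2 = n - 1 by lia, Nat.add_sub_cancel]
    linear_combination 4 * n * two_mul_sum_range_sub_one n

lemma eight_mul_card_wedge_le (N : ℕ) : 8 * #(wedge N) ≤ N ^ 4 := by
  induction N with
  | zero => simp [card_wedge]
  | succ N ih =>
    rw [eight_mul_card_wedge_succ]
    have : (N - 1) ^ 2 * (N - 2) ≤ N ^ 2 * N := by gcongr <;> lia
    nlinarith

lemma pow_four_le_eight_mul_card_wedge (N : ℕ) : N ^ 4 ≤ 8 * #(wedge N) + 8 * N ^ 3 := by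
  induction N with
  | zero => simp
  | succ N ih =>
    rw [eight_mul_card_wedge_succ]
    rcases N with _ | _ | N
    · simp
    · lia
    · rw [show N + 1 + 1 - 1 = N + 1 by lia, show N + 1 + 1 - 2 = N by lia]
      nlinarith

/-- The side vectors of the triangle with a single vertex at a corner of its bounding box. -/
def cornerPair : ℕ × ℕ × ℕ × ℕ → GaussianInt × GaussianInt
  | (a, c, v, u) => (⟨a, u⟩, ⟨c, v⟩)

/-- The side vectors of the triangle with vertices at two opposite corners of its bounding box. -/
def diagonalPair : ℕ × ℕ × ℕ × ℕ → GaussianInt × GaussianInt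
  | (a, c, v, u) => (⟨a, v⟩, ⟨c, u⟩)

open Classical in
/-- The parameters whose side vectors vanish under `φ`. -/
def vanishing {R : Type*} [Ring R] (φ : GaussianInt →+* R)
    (f : ℕ × ℕ × ℕ × ℕ → GaussianInt × GaussianInt) (N : ℕ) : Finset (ℕ × ℕ × ℕ × ℕ) :=
  {x ∈ wedge N | φ (f x).1 = 0 ∧ φ (f x).2 = 0}

lemma mem_vanishing {R : Type*} [Ring R] {φ : GaussianInt →+* R}
    {f : ℕ × ℕ × ℕ × ℕ → GaussianInt × GaussianInt} {N : ℕ} {x : ℕ × ℕ × ℕ × ℕ} :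
    x ∈ vanishing φ f N ↔ x ∈ wedge N ∧ φ (f x).1 = 0 ∧ φ (f x).2 = 0 := by
  simp only [vanishing, mem_filter]

/-- The properties of the two families of triangles used in counting them. -/
structure IsSievable (f : ℕ × ℕ × ℕ × ℕ → GaussianInt × GaussianInt) : Prop where
  injective : f.Injective
  isStandard {N : ℕ} {x : ℕ × ℕ × ℕ × ℕ} (hx : x ∈ wedge N) : IsStandard (f x).1 (f x).2
  mem_gaussBox {N : ℕ} {x : ℕ × ℕ × ℕ × ℕ} (hx : x ∈ wedge N) :
    (f x).1 ∈ gaussBox N ∧ (f x).2 ∈ gaussBox N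
  /-- Any two coordinates in distinct sides determine the others modulo `p`. -/
  sq_mul_card_vanishing_le {p : ℕ} (φ : GaussianInt →+* ZMod p) (N : ℕ) :
    p ^ 2 * #(vanishing φ f N) ≤ #(wedge (N + p))

lemma natCast_eq_of_map_eq_left {R : Type*} [CommRing R] {φ : GaussianInt →+* R} {x x' y : ℕ}
    (h : φ ⟨x, y⟩ = φ ⟨x', y⟩) : (x : R) = x' := by
  rw [map_gaussianInt_eq φ ⟨x, y⟩, map_gaussianInt_eq φ ⟨x', y⟩] at h
  simpa using h

lemma natCast_eq_of_map_eq_right {R : Type*} [CommRing R] {φ : GaussianInt →+* R} {x y y' : ℕ}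
    (h : φ ⟨x, y⟩ = φ ⟨x, y'⟩) : (y : R) = y' := by
  rw [map_gaussianInt_eq φ ⟨x, y⟩, map_gaussianInt_eq φ ⟨x, y'⟩] at h
  simpa using (isUnit_map_sqrtd φ).mul_right_cancel (add_left_cancel h)

lemma eq_of_add_eq_add_of_natCast_eq {p x x' s s' : ℕ} (h : (x : ZMod p) = x') (hs : s < p)
    (hs' : s' < p) (hadd : x + s = x' + s') : x = x' ∧ s = s' := by
  have hmod : s ≡ s' [MOD p] :=
    Nat.ModEq.add_left_cancel ((ZMod.natCast_eq_natCast_iff _ _ _).1 h) (hadd ▸ .rfl)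
  have := hmod.eq_of_lt_of_lt hs hs'
  lia

lemma sq_mul_card_vanishing_cornerPair_le {p : ℕ} (φ : GaussianInt →+* ZMod p) (N : ℕ) :
    p ^ 2 * #(vanishing φ cornerPair N) ≤ #(wedge (N + p)) := by
  calc p ^ 2 * #(vanishing φ cornerPair N)
      = #(vanishing φ cornerPair N ×ˢ range p ×ˢ range p) := by
        rw [card_product, card_product, card_range, sq, mul_comm]
    _ ≤ #(wedge (N + p)) := card_le_card_of_injOn
        (fun ((a, c, v, u), s, t) ↦ (a + p, c + s, v + p, u + t)) ?_ ?_
  · rintro ⟨⟨a, c, v, u⟩, s, t⟩ h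
    simp only [coe_product, Set.mem_prod, mem_coe, mem_vanishing, mem_range,
      mem_wedge] at h ⊢
    lia
  · rintro ⟨⟨a, c, v, u⟩, s, t⟩ h ⟨⟨a', c', v', u'⟩, s', t'⟩ h' heq
    simp only [coe_product, Set.mem_prod, mem_coe, mem_vanishing, mem_range, cornerPair]
      at h h'
    simp only [Prod.mk.injEq, add_left_inj] at heq
    obtain ⟨rfl, hc, rfl, hu⟩ := heq
    obtain ⟨⟨-, hz, hw⟩, hs, ht⟩ := h
    obtain ⟨⟨-, hz', hw'⟩, hs', ht'⟩ := h'
    obtain ⟨rfl, rfl⟩ := eq_of_add_eq_add_of_natCast_eq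
      (natCast_eq_of_map_eq_left (hw.trans hw'.symm)) hs hs' hc
    obtain ⟨rfl, rfl⟩ := eq_of_add_eq_add_of_natCast_eq
      (natCast_eq_of_map_eq_right (hz.trans hz'.symm)) ht ht' hu
    rfl

lemma isSievable_cornerPair : IsSievable cornerPair where
  injective := by
    rintro ⟨a, c, v, u⟩ ⟨a', c', v', u'⟩ h
    simp only [cornerPair, Prod.mk.injEq, Zsqrtd.ext_iff] at h ⊢
    lia
  isStandard := by
    rintro N ⟨a, c, v, u⟩ hx
    rw [mem_wedge] at hx
    constructor <;> simp only [cornerPair] <;> lia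
  mem_gaussBox := by
    rintro N ⟨a, c, v, u⟩ hx
    rw [mem_wedge] at hx
    simp only [cornerPair, _root_.mem_gaussBox]
    lia
  sq_mul_card_vanishing_le := sq_mul_card_vanishing_cornerPair_le

lemma sq_mul_card_vanishing_diagonalPair_le {p : ℕ} (φ : GaussianInt →+* ZMod p) (N : ℕ) :
    p ^ 2 * #(vanishing φ diagonalPair N) ≤ #(wedge (N + p)) := by
  calc p ^ 2 * #(vanishing φ diagonalPair N)
      = #(vanishing φ diagonalPair N ×ˢ range p ×ˢ range p) := by
        rw [card_product, card_product, card_range, sq, mul_comm]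
    _ ≤ #(wedge (N + p)) := card_le_card_of_injOn
        (fun ((a, c, v, u), s, t) ↦ (a + p, c + s, v + t, u)) ?_ ?_
  · rintro ⟨⟨a, c, v, u⟩, s, t⟩ h
    simp only [coe_product, Set.mem_prod, mem_coe, mem_vanishing, mem_range,
      mem_wedge] at h ⊢
    lia
  · rintro ⟨⟨a, c, v, u⟩, s, t⟩ h ⟨⟨a', c', v', u'⟩, s', t'⟩ h' heq
    simp only [coe_product, Set.mem_prod, mem_coe, mem_vanishing, mem_range, diagonalPair]
      at h h'
    simp only [Prod.mk.injEq, add_left_inj] at heq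
    obtain ⟨rfl, hc, hv, rfl⟩ := heq
    obtain ⟨⟨-, hz, hw⟩, hs, ht⟩ := h
    obtain ⟨⟨-, hz', hw'⟩, hs', ht'⟩ := h'
    obtain ⟨rfl, rfl⟩ := eq_of_add_eq_add_of_natCast_eq
      (natCast_eq_of_map_eq_left (hw.trans hw'.symm)) hs hs' hc
    obtain ⟨rfl, rfl⟩ := eq_of_add_eq_add_of_natCast_eq
      (natCast_eq_of_map_eq_right (hz.trans hz'.symm)) ht ht' hv
    rfl

lemma isSievable_diagonalPair : IsSievable diagonalPair where
  injective := by
    rintro ⟨a, c, v, u⟩ ⟨a', c', v', u'⟩ h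
    simp only [diagonalPair, Prod.mk.injEq, Zsqrtd.ext_iff] at h ⊢
    lia
  isStandard := by
    rintro N ⟨a, c, v, u⟩ hx
    rw [mem_wedge] at hx
    constructor <;> simp only [diagonalPair] <;> lia
  mem_gaussBox := by
    rintro N ⟨a, c, v, u⟩ hx
    rw [mem_wedge] at hx
    simp only [diagonalPair, _root_.mem_gaussBox]
    lia
  sq_mul_card_vanishing_le := sq_mul_card_vanishing_diagonalPair_le

end Families

section LowerBound

open Classical in
/-- The parameters whose side vectors have no common Gaussian prime factor of split norm. -/
def coprimePart (f : ℕ × ℕ × ℕ × ℕ → GaussianInt × GaussianInt) (N : ℕ) :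
    Finset (ℕ × ℕ × ℕ × ℕ) :=
  {x ∈ wedge N | ∀ p : SplitPrime, ¬CommonSplitFactor p (f x).1 (f x).2}

/-- The congruence class in the grid `[N] × [N]` of the triangle with the side vectors `q`. -/
def pairClass (N : ℕ) (q : GaussianInt × GaussianInt) : Set (Set Plane) :=
  congClass N (triangle q.1 q.2)

variable {f g : ℕ × ℕ × ℕ × ℕ → GaussianInt × GaussianInt} {N : ℕ} {x y : ℕ × ℕ × ℕ × ℕ}

lemma coprimePart_subset_wedge : coprimePart f N ⊆ wedge N := by
  classical exact filter_subset _ _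

lemma IsSievable.triangle_mem (hf : IsSievable f) (hx : x ∈ wedge N) :
    triangle (f x).1 (f x).2 ∈ gridTriples N := by
  obtain ⟨hw, hwz, -, -, -, -⟩ := hf.isStandard hx
  obtain ⟨hz_mem, hw_mem⟩ := hf.mem_gaussBox hx
  exact triangle_mem_gridTriples hz_mem hw_mem (ne_of_apply_ne Zsqrtd.re (hw.trans hwz).ne')
    (ne_of_apply_ne Zsqrtd.re hw.ne') (ne_of_apply_ne Zsqrtd.re hwz.ne')

lemma IsSievable.eq_of_pairClass_eq (hf : IsSievable f) (hg : IsSievable g)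
    (hx : x ∈ coprimePart f N) (hy : y ∈ wedge N) (h : pairClass N (f x) = pairClass N (g y)) :
    (g y).1 = (f x).1 ∧ ((g y).2 = (f x).2 ∨ (g y).2 = (f x).1 - (f x).2) := by
  simp only [coprimePart, mem_filter] at hx
  exact (hf.isStandard hx.1).eq_of_cong (hg.isStandard hy) hx.2
    (cong_of_congClass_eq (hg.triangle_mem hy) h)

lemma IsSievable.coe_image_pairClass_subset (hf : IsSievable f) :
    (fun x ↦ pairClass N (f x)) '' coprimePart f N ⊆ congClasses N := by
  rintro _ ⟨x, hx, rfl⟩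
  exact ⟨_, hf.triangle_mem (coprimePart_subset_wedge hx), rfl⟩

lemma injOn_pairClass_cornerPair :
    Set.InjOn (fun x ↦ pairClass N (cornerPair x)) (coprimePart cornerPair N) := by
  rintro ⟨a, c, v, u⟩ hx ⟨a', c', v', u'⟩ hy h
  have heq := isSievable_cornerPair.eq_of_pairClass_eq isSievable_cornerPair hx
    (coprimePart_subset_wedge hy) h
  have hx' := mem_wedge.1 (coprimePart_subset_wedge hx)
  simp only [cornerPair, Zsqrtd.ext_iff, Zsqrtd.re_sub, Zsqrtd.im_sub, Prod.mk.injEq] at heq ⊢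
  lia

lemma pairClass_cornerPair_ne_diagonalPair (hx : x ∈ coprimePart cornerPair N)
    (hy : y ∈ wedge N) : pairClass N (cornerPair x) ≠ pairClass N (diagonalPair y) := by
  intro h
  have heq := isSievable_cornerPair.eq_of_pairClass_eq isSievable_diagonalPair hx hy h
  obtain ⟨a, c, v, u⟩ := x
  obtain ⟨a', c', v', u'⟩ := y
  have hx' := mem_wedge.1 (coprimePart_subset_wedge hx)
  have hy' := mem_wedge.1 hy
  simp only [cornerPair, diagonalPair, Zsqrtd.ext_iff, Zsqrtd.re_sub, Zsqrtd.im_sub] at heq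
  lia

open Classical in
lemma card_fiber_pairClass_diagonalPair_le (hx : x ∈ coprimePart diagonalPair N) :
    #{y ∈ coprimePart diagonalPair N |
      pairClass N (diagonalPair y) = pairClass N (diagonalPair x)} ≤ 2 := by
  obtain ⟨a, c, v, u⟩ := x
  refine (card_le_card (t := {(a, c, v, u), (a, a - c, v, v - u)}) ?_).trans card_le_two
  rintro ⟨a', c', v', u'⟩ hy
  rw [mem_filter] at hy
  have heq := isSievable_diagonalPair.eq_of_pairClass_eq isSievable_diagonalPair hx
    (coprimePart_subset_wedge hy.1) hy.2.symm
  simp only [diagonalPair, Zsqrtd.ext_iff, Zsqrtd.re_sub, Zsqrtd.im_sub] at heq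
  simp only [mem_insert, mem_singleton, Prod.mk.injEq]
  lia

theorem two_mul_card_cornerPair_add_card_diagonalPair_le (N : ℕ) :
    2 * #(coprimePart cornerPair N) + #(coprimePart diagonalPair N) ≤ 2 * T N := by
  classical
  set corner := (coprimePart cornerPair N).image fun x ↦ pairClass N (cornerPair x) with hcorner
  set diagonal := (coprimePart diagonalPair N).image fun x ↦ pairClass N (diagonalPair x)
    with hdiagonal
  have hcard_corner : #corner = #(coprimePart cornerPair N) :=
    card_image_of_injOn injOn_pairClass_cornerPair
  have hcard_diagonal : #(coprimePart diagonalPair N) ≤ 2 * #diagonal := by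
    refine card_le_mul_card_image _ 2 fun b hb ↦ ?_
    obtain ⟨x, hx, rfl⟩ := mem_image.1 hb
    exact card_fiber_pairClass_diagonalPair_le hx
  have hdisjoint : Disjoint corner diagonal := by
    simp only [disjoint_left, hcorner, hdiagonal, mem_image, not_exists, not_and]
    rintro _ ⟨x, hx, rfl⟩ y hy h
    exact pairClass_cornerPair_ne_diagonalPair hx (coprimePart_subset_wedge hy) h.symm
  have hsubset : ((corner ∪ diagonal : Finset _) : Set _) ⊆ congClasses N := by
    rw [coe_union, coe_image, coe_image]
    exact Set.union_subset isSievable_cornerPair.coe_image_pairClass_subset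
      isSievable_diagonalPair.coe_image_pairClass_subset
  have hle : #(corner ∪ diagonal) ≤ T N := by
    rw [← Set.ncard_coe_finset]
    exact Set.ncard_le_ncard hsubset (finite_congClasses N)
  rw [card_union_of_disjoint hdisjoint] at hle
  lia

end LowerBound

section Sieve

open Classical in
/-- The points of the square `[0, N) × [0, N)` on the lattice `ker φ`. -/
def latticePoints {R : Type*} [Ring R] (φ : GaussianInt →+* R) (N : ℕ) : Finset GaussianInt :=
  {z ∈ gaussBox N | φ z = 0}

open Classical in
/-- The parameters whose side vectors have a common Gaussian prime factor above `p`. -/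
def commonFactorPart (f : ℕ × ℕ × ℕ × ℕ → GaussianInt × GaussianInt) (N p : ℕ) :
    Finset (ℕ × ℕ × ℕ × ℕ) :=
  {x ∈ wedge N | CommonSplitFactor p (f x).1 (f x).2}

variable {f : ℕ × ℕ × ℕ × ℕ → GaussianInt × GaussianInt} {p : ℕ}

lemma dvd_norm_of_map_eq_zero {φ : GaussianInt →+* ZMod p} {z : GaussianInt} (h : φ z = 0) :
    (p : ℤ) ∣ z.norm :=
  (ZMod.intCast_zmod_eq_zero_iff_dvd _ _).1 (intCast_norm_eq_zero_of_map_eq_zero h)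

lemma injOn_map_gaussBox (φ : GaussianInt →+* ZMod p) {k : ℕ} (hk : 2 * k ^ 2 < p) :
    Set.InjOn φ (gaussBox (k + 1)) := by
  intro z hz w hw h
  rw [mem_coe, mem_gaussBox] at hz hw
  have hre : (z.re - w.re) ^ 2 ≤ k ^ 2 := sq_le_sq' (by lia) (by lia)
  have him : (z.im - w.im) ^ 2 ≤ k ^ 2 := sq_le_sq' (by lia) (by lia)
  have hnorm : (z - w).norm = (z.re - w.re) ^ 2 + (z.im - w.im) ^ 2 := by
    rw [Zsqrtd.norm_def, Zsqrtd.re_sub, Zsqrtd.im_sub]; ring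
  have hdvd : (p : ℤ) ∣ (z - w).norm :=
    dvd_norm_of_map_eq_zero (φ := φ) (by rw [map_sub, h, sub_self])
  have hzero : (z - w).norm = 0 :=
    Int.eq_zero_of_dvd_of_nonneg_of_lt (GaussianInt.norm_nonneg _) (by lia) hdvd
  exact sub_eq_zero.1 (GaussianInt.norm_eq_zero.1 hzero)

/-- The translates of the square of side `k + 1` by the points of `ker φ` are disjoint. -/
lemma card_latticePoints_mul_sq_le (φ : GaussianInt →+* ZMod p) {k : ℕ} (hk : 2 * k ^ 2 < p)
    (N : ℕ) : #(latticePoints φ N) * (k + 1) ^ 2 ≤ (N + k) ^ 2 := by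
  rw [← card_gaussBox, ← card_gaussBox, ← card_product]
  refine card_le_card_of_injOn (fun q ↦ q.1 + q.2) ?_ ?_
  · rintro ⟨z, w⟩ h
    simp only [latticePoints, coe_product, Set.mem_prod, mem_coe, mem_filter, mem_gaussBox,
      Zsqrtd.re_add, Zsqrtd.im_add] at h ⊢
    lia
  · rintro ⟨z, w⟩ h ⟨z', w'⟩ h' heq
    simp only [latticePoints, coe_product, Set.mem_prod, mem_coe, mem_filter] at h h'
    have hmap : φ w = φ w' := by simpa [h.1.2, h'.1.2] using congrArg φ heq
    obtain rfl : w = w' := injOn_map_gaussBox φ hk h.2 h'.2 hmap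
    exact Prod.ext (add_right_cancel heq) rfl

lemma mul_card_latticePoints_le (φ : GaussianInt →+* ZMod p) (hp : 0 < p) {N : ℕ}
    (hpN : p ≤ 2 * N ^ 2) : p * #(latticePoints φ N) ≤ 8 * N ^ 2 := by
  set k := ((p - 1) / 2).sqrt
  have hk : k ^ 2 ≤ (p - 1) / 2 := Nat.sqrt_le' _
  have hk' : (p - 1) / 2 < (k + 1) ^ 2 := Nat.lt_succ_sqrt' _
  have hkN : k ≤ N := (Nat.pow_le_pow_iff_left two_ne_zero).1 (by lia)
  calc p * #(latticePoints φ N)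
      ≤ 2 * (k + 1) ^ 2 * #(latticePoints φ N) := by gcongr; lia
    _ = 2 * (#(latticePoints φ N) * (k + 1) ^ 2) := by ring
    _ ≤ 2 * (N + k) ^ 2 := by
        gcongr; exact card_latticePoints_mul_sq_le φ (by lia) N
    _ ≤ 2 * (N + N) ^ 2 := by gcongr
    _ = 8 * N ^ 2 := by ring

lemma le_of_mem_gaussBox_of_map_eq_zero {φ : GaussianInt →+* ZMod p} {N : ℕ} {z : GaussianInt}
    (hz : z ∈ gaussBox N) (hz_ne : z ≠ 0) (h : φ z = 0) : p ≤ 2 * N ^ 2 := by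
  rw [mem_gaussBox] at hz
  have hle := Int.le_of_dvd (GaussianInt.norm_pos.2 hz_ne) (dvd_norm_of_map_eq_zero h)
  rw [Zsqrtd.norm_def] at hle
  zify
  nlinarith

lemma IsSievable.le_of_mem_vanishing (hf : IsSievable f) {φ : GaussianInt →+* ZMod p} {N : ℕ}
    {x : ℕ × ℕ × ℕ × ℕ} (hx : x ∈ vanishing φ f N) : p ≤ 2 * N ^ 2 := by
  obtain ⟨hwedge, hz, -⟩ := mem_vanishing.1 hx
  have hz_pos := (hf.isStandard hwedge).re_pos.trans (hf.isStandard hwedge).re_lt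
  exact le_of_mem_gaussBox_of_map_eq_zero (hf.mem_gaussBox hwedge).1
    (ne_of_apply_ne Zsqrtd.re hz_pos.ne') hz

lemma IsSievable.sq_mul_card_vanishing_le_pow (hf : IsSievable f) (φ : GaussianInt →+* ZMod p)
    (hp : 0 < p) (N : ℕ) : p ^ 2 * #(vanishing φ f N) ≤ 64 * N ^ 4 := by
  rcases (vanishing φ f N).eq_empty_or_nonempty with hempty | ⟨x, hx⟩
  · simp [hempty]
  have hcard : #(vanishing φ f N) ≤ #(latticePoints φ N ×ˢ latticePoints φ N) := by
    refine card_le_card_of_injOn f (fun y hy ↦ ?_) hf.injective.injOn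
    obtain ⟨hwedge, hz, hw⟩ := mem_vanishing.1 hy
    simp only [latticePoints, coe_product, Set.mem_prod, mem_coe, mem_filter]
    exact ⟨⟨(hf.mem_gaussBox hwedge).1, hz⟩, (hf.mem_gaussBox hwedge).2, hw⟩
  calc p ^ 2 * #(vanishing φ f N)
      ≤ p ^ 2 * #(latticePoints φ N ×ˢ latticePoints φ N) := by gcongr
    _ = (p * #(latticePoints φ N)) ^ 2 := by rw [card_product]; ring
    _ ≤ (8 * N ^ 2) ^ 2 :=
        Nat.pow_le_pow_left (mul_card_latticePoints_le φ hp (hf.le_of_mem_vanishing hx)) 2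
    _ = 64 * N ^ 4 := by ring

/-- There are at most two Gaussian primes above `p`. -/
lemma sq_mul_card_commonFactorPart_le [Fact p.Prime] {N K : ℕ}
    (h : ∀ φ : GaussianInt →+* ZMod p, p ^ 2 * #(vanishing φ f N) ≤ K) :
    p ^ 2 * #(commonFactorPart f N p) ≤ 2 * K := by
  classical
  rcases isEmpty_or_nonempty (GaussianInt →+* ZMod p) with hempty | ⟨⟨φ⟩⟩
  · simp [commonFactorPart, CommonSplitFactor]
  set φ' := φ.comp (starRingEnd GaussianInt)
  have hsubset : commonFactorPart f N p ⊆ vanishing φ f N ∪ vanishing φ' f N := by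
    intro x hx
    simp only [commonFactorPart, mem_filter] at hx
    obtain ⟨hwedge, ψ, hψ⟩ := hx
    rw [mem_union, mem_vanishing, mem_vanishing]
    rcases ringHom_eq_or_eq_comp_star φ ψ with rfl | rfl
    exacts [.inl ⟨hwedge, hψ⟩, .inr ⟨hwedge, hψ⟩]
  calc p ^ 2 * #(commonFactorPart f N p)
      ≤ p ^ 2 * (#(vanishing φ f N) + #(vanishing φ' f N)) := by
        gcongr; exact (card_le_card hsubset).trans (card_union_le _ _)
    _ ≤ 2 * K := by rw [mul_add, two_mul]; exact add_le_add (h φ) (h φ')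

/-- A bound for the proportion of parameters whose side vectors have a common Gaussian prime
factor above `p`; the first entry of the minimum is sharp as `N → ∞`, the second is summable. -/
def sieveTerm (N p : ℕ) : ℝ := min ((1 + (p : ℝ) / N) ^ 4 / 8) 64 * (2 / (p : ℝ) ^ 2)

lemma sieveTerm_nonneg (N p : ℕ) : 0 ≤ sieveTerm N p := by rw [sieveTerm]; positivity

lemma sieveTerm_le (N p : ℕ) : sieveTerm N p ≤ 128 * (1 / (p : ℝ) ^ 2) :=
  calc sieveTerm N p ≤ 64 * (2 / (p : ℝ) ^ 2) := by rw [sieveTerm]; gcongr; exact min_le_right _ _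
    _ = 128 * (1 / p ^ 2) := by ring

lemma summable_one_div_sq_splitPrime : Summable fun p : SplitPrime ↦ 1 / (p : ℝ) ^ 2 :=
  (Real.summable_one_div_nat_pow.2 one_lt_two).comp_injective Subtype.val_injective

lemma summable_sieveTerm (N : ℕ) : Summable fun p : SplitPrime ↦ sieveTerm N p :=
  .of_nonneg_of_le (fun p ↦ sieveTerm_nonneg N p) (fun p ↦ sieveTerm_le N p)
    (summable_one_div_sq_splitPrime.mul_left 128)

lemma IsSievable.card_commonFactorPart_le (hf : IsSievable f) [Fact p.Prime] {N : ℕ}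
    (hN : 0 < N) : #(commonFactorPart f N p) ≤ N ^ 4 * sieveTerm N p := by
  have hp : 0 < p := Fact.out (p := p.Prime).pos
  have hwindow : p ^ 2 * #(commonFactorPart f N p) ≤ 2 * #(wedge (N + p)) :=
    sq_mul_card_commonFactorPart_le fun φ ↦ hf.sq_mul_card_vanishing_le φ N
  have hpacking : p ^ 2 * #(commonFactorPart f N p) ≤ 2 * (64 * N ^ 4) :=
    sq_mul_card_commonFactorPart_le fun φ ↦ hf.sq_mul_card_vanishing_le_pow φ hp N
  have hwedge : 8 * #(wedge (N + p)) ≤ (N + p) ^ 4 := eight_mul_card_wedge_le _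
  have : (0 : ℝ) < N := Nat.cast_pos.2 hN
  have hlarge : (#(commonFactorPart f N p) : ℝ) * p ^ 2 / 2 ≤ N ^ 4 * ((1 + (p : ℝ) / N) ^ 4 / 8) :=
    calc (#(commonFactorPart f N p) : ℝ) * p ^ 2 / 2
        ≤ (N + p) ^ 4 / 8 := by
          have : 8 * (p ^ 2 * #(commonFactorPart f N p)) ≤ 2 * (N + p) ^ 4 := by lia
          have : 8 * ((p : ℝ) ^ 2 * #(commonFactorPart f N p)) ≤ 2 * (N + p) ^ 4 := mod_cast this
          linarith
      _ = N ^ 4 * ((1 + (p : ℝ) / N) ^ 4 / 8) := by field_simp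
  have hsmall : (#(commonFactorPart f N p) : ℝ) * p ^ 2 / 2 ≤ N ^ 4 * 64 := by
    have : (p : ℝ) ^ 2 * #(commonFactorPart f N p) ≤ 2 * (64 * N ^ 4) := mod_cast hpacking
    linarith
  have hmin := le_min hlarge hsmall
  rw [← mul_min_of_nonneg _ _ (by positivity)] at hmin
  rw [sieveTerm, ← mul_assoc, ← mul_div_assoc, le_div_iff₀ (by positivity)]
  linarith

theorem IsSievable.card_wedge_le (hf : IsSievable f) {N : ℕ} (hN : 0 < N) :
    #(wedge N) ≤ #(coprimePart f N) + N ^ 4 * ∑' p : SplitPrime, sieveTerm N p := by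
  classical
  let primes : Finset SplitPrime := (range (2 * N ^ 2 + 1)).subtype fun p ↦ p.Prime ∧ p % 4 = 1
  have hcover : wedge N ⊆ coprimePart f N ∪ primes.biUnion fun p ↦ commonFactorPart f N p := by
    intro x hx
    simp only [mem_union, coprimePart, commonFactorPart, mem_filter, mem_biUnion, hx, true_and,
      or_iff_not_imp_left, not_forall, not_not]
    rintro ⟨p, φ, h⟩
    refine ⟨p, ?_, φ, h⟩
    have := hf.le_of_mem_vanishing (mem_vanishing.2 ⟨hx, h⟩)
    rw [mem_subtype, mem_range]
    lia
  have hcard : #(wedge N) ≤ #(coprimePart f N) + ∑ p ∈ primes, #(commonFactorPart f N p) :=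
    (card_le_card hcover).trans <| (card_union_le _ _).trans <| by gcongr; exact card_biUnion_le
  calc (#(wedge N) : ℝ)
      ≤ #(coprimePart f N) + ∑ p ∈ primes, (#(commonFactorPart f N p) : ℝ) := mod_cast hcard
    _ ≤ #(coprimePart f N) + ∑ p ∈ primes, N ^ 4 * sieveTerm N p := by
        gcongr with p; exact hf.card_commonFactorPart_le hN
    _ ≤ #(coprimePart f N) + N ^ 4 * ∑' p : SplitPrime, sieveTerm N p := by
        rw [← mul_sum]
        gcongr
        exact (summable_sieveTerm N).sum_le_tsum _ fun p _ ↦ sieveTerm_nonneg N p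

end Sieve

section Limit

lemma tendsto_sieveTerm (p : ℕ) :
    Tendsto (fun N ↦ sieveTerm N p) atTop (𝓝 (1 / 4 * (1 / (p : ℝ) ^ 2))) := by
  have hratio : Tendsto (fun N : ℕ ↦ (1 + (p : ℝ) / N) ^ 4 / 8) atTop (𝓝 ((1 + 0) ^ 4 / 8)) :=
    (((tendsto_const_div_atTop_nhds_zero_nat _).const_add 1).pow 4).div_const 8
  have hlimit : min ((1 + 0) ^ 4 / 8) 64 * (2 / (p : ℝ) ^ 2) = 1 / 4 * (1 / (p : ℝ) ^ 2) := by
    rw [min_eq_left (by norm_num)]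
    ring
  exact hlimit ▸ (hratio.min tendsto_const_nhds).mul_const _

lemma tendsto_tsum_sieveTerm :
    Tendsto (fun N ↦ ∑' p : SplitPrime, sieveTerm N p) atTop
      (𝓝 (1 / 4 * ∑' p : SplitPrime, 1 / (p : ℝ) ^ 2)) := by
  rw [← tsum_mul_left]
  refine tendsto_tsum_of_dominated_convergence (summable_one_div_sq_splitPrime.mul_left 128)
    (fun p ↦ tendsto_sieveTerm p) (.of_forall fun N p ↦ ?_)
  rw [Real.norm_of_nonneg (sieveTerm_nonneg N p)]
  exact sieveTerm_le N p

lemma le_T_div_pow {N : ℕ} (hN : 0 < N) :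
    3 / 2 * (1 / 8 - 1 / N - ∑' p : SplitPrime, sieveTerm N p) ≤ (T N : ℝ) / N ^ 4 := by
  have hcorner := isSievable_cornerPair.card_wedge_le hN
  have hdiagonal := isSievable_diagonalPair.card_wedge_le hN
  have hwedge : (N : ℝ) ^ 4 ≤ 8 * #(wedge N) + 8 * N ^ 3 :=
    mod_cast pow_four_le_eight_mul_card_wedge N
  have hT : 2 * (#(coprimePart cornerPair N) : ℝ) + #(coprimePart diagonalPair N) ≤ 2 * T N :=
    mod_cast two_mul_card_cornerPair_add_card_diagonalPair_le N
  have : (0 : ℝ) < N := Nat.cast_pos.2 hN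
  have hdiv : 1 / (N : ℝ) * N ^ 4 = N ^ 3 := by field_simp
  rw [le_div_iff₀ (by positivity)]
  linarith

lemma T_div_pow_le (N : ℕ) : (T N : ℝ) / N ^ 4 ≤ 16 :=
  div_le_of_le_mul₀ (by positivity) (by norm_num) (mod_cast T_le N)

lemma hasSum_one_div_mul_add_four :
    HasSum (fun k : ℕ ↦ 1 / ((4 * k + 3) * (4 * k + 7) : ℝ)) (1 / 12) := by
  rw [hasSum_iff_tendsto_nat_of_nonneg fun k ↦ by positivity]
  have htelescope (n : ℕ) : ∑ k ∈ range n, 1 / ((4 * k + 3) * (4 * k + 7) : ℝ) =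
      1 / 12 - 1 / 4 / ((4 * n + 3 : ℕ) : ℝ) := by
    induction n with
    | zero => norm_num
    | succ n ih =>
      rw [sum_range_succ, ih]
      push_cast
      field_simp
      ring
  simp_rw [htelescope]
  have hlinear : Tendsto (fun n ↦ 4 * n + 3) atTop atTop :=
    tendsto_atTop_mono (fun n ↦ show n ≤ 4 * n + 3 by lia) tendsto_id
  simpa using ((tendsto_const_div_atTop_nhds_zero_nat _).comp hlinear).const_sub (1 / 12 : ℝ)

lemma tsum_one_div_sq_splitPrime_le : ∑' p : SplitPrime, 1 / (p : ℝ) ^ 2 ≤ 1 / 12 := by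
  have hform (p : SplitPrime) : (p : ℕ) = 4 * ((p : ℕ) / 4 - 1) + 5 := by
    have := p.2.1.two_le
    have := p.2.2
    lia
  have hinj : Function.Injective fun p : SplitPrime ↦ (p : ℕ) / 4 - 1 := fun p q h ↦
    Subtype.ext (by rw [hform p, hform q]; lia)
  rw [← hasSum_one_div_mul_add_four.tsum_eq]
  refine Summable.tsum_le_tsum_of_inj _ hinj (fun k _ ↦ by positivity) (fun p ↦ ?_)
    summable_one_div_sq_splitPrime hasSum_one_div_mul_add_four.summable
  refine one_div_le_one_div_of_le (by positivity) ?_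
  have hp : (p : ℝ) = 4 * ((p / 4 - 1 : ℕ) : ℝ) + 5 := mod_cast hform p
  nlinarith

theorem sub_tsum_splitPrime_le_liminf :
    3 / 16 - 3 / 8 * ∑' p : SplitPrime, 1 / (p : ℝ) ^ 2 ≤
      liminf (fun N : ℕ ↦ (T N : ℝ) / (N : ℝ) ^ 4) atTop := by
  set S := ∑' p : SplitPrime, 1 / (p : ℝ) ^ 2
  have hlim : Tendsto
      (fun N : ℕ ↦ 3 / 2 * (1 / 8 - 1 / (N : ℝ) - ∑' p : SplitPrime, sieveTerm N p)) atTop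
      (𝓝 (3 / 2 * (1 / 8 - 0 - 1 / 4 * S))) :=
    ((tendsto_one_div_atTop_nhds_zero_nat.const_sub _).sub tendsto_tsum_sieveTerm).const_mul _
  have hbdd : IsBoundedUnder (· ≤ ·) atTop fun N : ℕ ↦ (T N : ℝ) / (N : ℝ) ^ 4 :=
    isBoundedUnder_of ⟨16, T_div_pow_le⟩
  calc 3 / 16 - 3 / 8 * S = 3 / 2 * (1 / 8 - 0 - 1 / 4 * S) := by ring
    _ = _ := hlim.liminf_eq.symm
    _ ≤ _ := liminf_le_liminf ((eventually_gt_atTop 0).mono fun N ↦ le_T_div_pow)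
      hlim.isBoundedUnder_ge hbdd.isCoboundedUnder_ge

end Limit

/-- The grid `[N] × [N]` spans asymptotically at least `0.1558 · N⁴` distinct
triangles. -/
theorem grid_triangles_liminf :
    0.1558 ≤ Filter.liminf (fun N : ℕ => (T N : ℝ) / (N : ℝ) ^ 4) Filter.atTop := by
  calc (0.1558 : ℝ) ≤ 3 / 16 - 3 / 8 * (1 / 12) := by norm_num
    _ ≤ 3 / 16 - 3 / 8 * ∑' p : SplitPrime, 1 / (p : ℝ) ^ 2 := by
      gcongr; exact tsum_one_div_sq_splitPrime_le
    _ ≤ _ := sub_tsum_splitPrime_le_liminf
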